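/- One has Û₀(τ) = 2πi for all τ ∈ ℍ, and for every integer n ≥ 1 the lowering operator satisfies L(Û_{2n})(τ) = −(π/2) Û_{2n−2}(τ), where Û_{2n}(τ) := 2i ∑_{0≤j≤n} (−1)^{n+j} π^{2n−j+1} U_{2n−2j}(q) / ((2v)^j j! (2n−2j+1)!). -/

import Mathlib

/-!
The content lies in two facts. First, the denominator of `Uram` never vanishes on the upper
half-plane, by Jacobi's identity `∑ (-1)^j (2j+1) q^{j(j+1)/2} = ∏ (1 - q^n)³` (`jacobi_cube`). This
gives `Û₀ = 2πi`, and with local uniform convergence of the series it makes every `U_{2n}(q)`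
holomorphic in `τ` (`differentiableAt_Uram_qq`). Secondly, `L` kills holomorphic functions and sends
`v^{-k}` to `-k v^{1-k}` (`lowerOp_term`), so applying it termwise to `Û_{2n}` drops the term `j = 0`
and turns the term `j + 1` into `-π/2` times the term `j` of `Û_{2n-2}`.

Jacobi's identity is the limit of a finite identity (`finite_jacobi`): the coefficients `c_N(j)` of
`(1 - z⁻¹) ∏_{k ≤ N} (1 - z q^k) (1 - z⁻¹ q^k)` are explicit `q`-binomial expressions
satisfying a three-term recurrence in `N`, from which the derivative at `z = 1`, that is
`∑_{j ≥ 0} (2j+1) c_N(j)`, is found to be `∏_{k ≤ N} (1 - q^k)²`. Dominated convergence then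
gives the infinite identity.
-/

open Complex Filter
open scoped Real

noncomputable section

/-- `q = e^{2πiτ}`. -/
def qq (τ : ℂ) : ℂ := Complex.exp (2 * (π : ℂ) * Complex.I * τ)

/-- The lowering operator `L = -2iv² ∂/∂τ̄`, where `∂/∂τ̄ = (1/2)(∂/∂u + i ∂/∂v)`. -/
def lowerOp (f : ℂ → ℂ) (τ : ℂ) : ℂ :=
  -2 * Complex.I * (τ.im : ℂ) ^ 2 *
    ((1 / 2 : ℂ) * (fderiv ℝ f τ 1 + Complex.I * fderiv ℝ f τ Complex.I))

/-- Ramanujan's series `U_{2n}(q)`: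
numerator `∑_{j≥0} (−1)^j (2j+1)^{2n+1} q^{j(j+1)/2}` divided by
denominator `∑_{j≥0} (−1)^j (2j+1) q^{j(j+1)/2}`. -/
def Uram (n : ℕ) (q : ℂ) : ℂ :=
  (∑' j : ℕ, (-1 : ℂ) ^ j * ((2 * j + 1 : ℕ) : ℂ) ^ (2 * n + 1) * q ^ (j * (j + 1) / 2)) /
    (∑' j : ℕ, (-1 : ℂ) ^ j * ((2 * j + 1 : ℕ) : ℂ) * q ^ (j * (j + 1) / 2))

/-- The completion
`Û_{2n}(τ) = 2i ∑_{0≤j≤n} (−1)^{n+j} π^{2n−j+1} U_{2n−2j}(q) / ((2v)^j j! (2n−2j+1)!)`. -/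
def Uhat (n : ℕ) (τ : ℂ) : ℂ :=
  2 * Complex.I * ∑ j ∈ Finset.range (n + 1),
    (-1 : ℂ) ^ (n + j) * (π : ℂ) ^ (2 * n - j + 1) * Uram (n - j) (qq τ) /
      ((2 * (τ.im : ℂ)) ^ j * (Nat.factorial j : ℂ) * (Nat.factorial (2 * n - 2 * j + 1) : ℂ))

/-! ### Jacobi's identity for the cube of the Euler product -/

/-- The finite `q`-Pochhammer symbol `(q; q)_m = ∏_{k=1}^m (1 - q^k)`. -/
def qPoch (q : ℂ) (m : ℕ) : ℂ := ∏ k ∈ Finset.range m, (1 - q ^ (k + 1))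

lemma qPoch_succ (q : ℂ) (m : ℕ) : qPoch q (m + 1) = qPoch q m * (1 - q ^ (m + 1)) :=
  Finset.prod_range_succ _ _

lemma one_sub_pow_ne_zero {q : ℂ} (hq : ‖q‖ < 1) (k : ℕ) : 1 - q ^ (k + 1) ≠ 0 := by
  intro h
  have h1 : ‖q ^ (k + 1)‖ < 1 := by
    rw [norm_pow]; exact pow_lt_one₀ (norm_nonneg _) hq (by omega)
  rw [← sub_eq_zero.mp h] at h1
  simp at h1

lemma qPoch_ne_zero {q : ℂ} (hq : ‖q‖ < 1) (m : ℕ) : qPoch q m ≠ 0 :=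
  Finset.prod_ne_zero_iff.mpr fun k _ => one_sub_pow_ne_zero hq k

/-- The limit of `(q; q)_m` exists and, crucially, is nonzero. -/
lemma qPoch_tendsto {q : ℂ} (hq : ‖q‖ < 1) :
    ∃ P : ℂ, P ≠ 0 ∧ Tendsto (qPoch q) atTop (nhds P) := by
  refine ⟨∏' n : ℕ, (1 - q ^ (n + 1)), ?_,
    (ModularForm.multipliable_one_sub_pow hq).tendsto_prod_tprod_nat⟩
  have := tprod_one_add_ne_zero_of_summable (f := fun n : ℕ => -q ^ (n + 1))
    (fun i => by simpa [← sub_eq_add_neg] using one_sub_pow_ne_zero hq i)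
    (by simpa using (summable_nat_add_iff 1).mpr (summable_geometric_of_lt_one (norm_nonneg _) hq))
  simpa [← sub_eq_add_neg] using this

/-- The reciprocal `1 / (q; q)_k`, indexed by integers and set to `0` for `k < 0`, the convention
under which `invPoch_step` holds for every integer `k`. -/
def invPoch (q : ℂ) (k : ℤ) : ℂ := if 0 ≤ k then (qPoch q k.toNat)⁻¹ else 0

lemma invPoch_natCast (q : ℂ) (m : ℕ) : invPoch q m = (qPoch q m)⁻¹ := by simp [invPoch]

lemma invPoch_of_neg (q : ℂ) {k : ℤ} (hk : k < 0) : invPoch q k = 0 := by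
  simp [invPoch, hk]

lemma invPoch_step {q : ℂ} (hq : ‖q‖ < 1) (k : ℤ) :
    invPoch q k = (1 - q ^ (k + 1)) * invPoch q (k + 1) := by
  rcases lt_trichotomy k (-1) with h | h | h
  · rw [invPoch_of_neg q (by omega), invPoch_of_neg q (by omega), mul_zero]
  · subst h; simp [invPoch]
  · lift k to ℕ using by omega
    have h1 : ((k : ℤ) + 1) = ((k + 1 : ℕ) : ℤ) := by push_cast; rfl
    rw [h1, invPoch_natCast, invPoch_natCast, zpow_natCast, qPoch_succ]
    have := one_sub_pow_ne_zero hq k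
    have := qPoch_ne_zero hq k
    field_simp

/-- The coefficient of `z^j` (for `j ≥ 0`) in the Laurent polynomial
`(1 - z⁻¹) ∏_{k=1}^N (1 - z q^k) (1 - z⁻¹ q^k)`, namely
`(-1)^j q^{j(j+1)/2} (q; q)_{2N+1} / ((q; q)_{N-j} (q; q)_{N+1+j})`. -/
def cTerm (q : ℂ) (N j : ℕ) : ℂ :=
  (-1) ^ j * q ^ (j * (j + 1) / 2) *
    (qPoch q (2 * N + 1) * invPoch q ((N : ℤ) - j) * invPoch q ((N : ℤ) + 1 + j))

lemma cTerm_of_lt (q : ℂ) {N j : ℕ} (h : N < j) : cTerm q N j = 0 := by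
  simp [cTerm, invPoch_of_neg q (show (N : ℤ) - j < 0 by omega)]

lemma triangle_succ (j : ℕ) : (j + 1) * (j + 1 + 1) / 2 = j * (j + 1) / 2 + (j + 1) := by
  rw [show (j + 1) * (j + 1 + 1) = j * (j + 1) + (j + 1) * 2 by ring,
    Nat.add_mul_div_right _ _ two_pos]

/-- Passing from `N` to `N + 1` multiplies the Laurent polynomial by
`(1 - z q^{N+1}) (1 - z⁻¹ q^{N+1}) = 1 + q^{2N+2} - q^{N+1} (z + z⁻¹)`; this is the resulting
three-term recurrence for its coefficients. -/
lemma cTerm_rec {q : ℂ} (hq : ‖q‖ < 1) (h0 : q ≠ 0) (N j : ℕ) :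
    cTerm q (N + 1) (j + 1) = (1 + q ^ (2 * N + 2)) * cTerm q N (j + 1)
      - q ^ (N + 1) * (cTerm q N j + cTerm q N (j + 2)) := by
  simp only [cTerm]
  rw [show j + 2 = j + 1 + 1 by ring, triangle_succ (j + 1), triangle_succ j,
    show 2 * (N + 1) + 1 = 2 * N + 1 + 1 + 1 by ring, qPoch_succ, qPoch_succ]
  have a1 := invPoch_step hq ((N : ℤ) - j - 1)
  have a2 := invPoch_step hq ((N : ℤ) - j - 2)
  have b1 := invPoch_step hq ((N : ℤ) + 1 + j)
  have b2 := invPoch_step hq ((N : ℤ) + 2 + j)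
  have e0 : q ^ ((N : ℤ) - j) = q ^ N / q ^ j := by
    rw [zpow_sub₀ h0]; simp
  have e1 : q ^ ((N : ℤ) - j - 1) = q ^ N / q ^ j / q := by
    rw [zpow_sub₀ h0, e0]; simp
  have e2 : q ^ ((N : ℤ) + 1 + j + 1) = q ^ (N + j + 2) := by
    rw [← zpow_natCast]; congr 1; push_cast; ring
  have e3 : q ^ ((N : ℤ) + 2 + j + 1) = q ^ (N + j + 3) := by
    rw [← zpow_natCast]; congr 1; push_cast; ring
  rw [show (N : ℤ) - j - 1 + 1 = N - j by ring, e0] at a1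
  rw [show (N : ℤ) - j - 2 + 1 = N - j - 1 by ring, e1, a1] at a2
  rw [e3] at b2
  rw [e2, show (N : ℤ) + 1 + j + 1 = N + 2 + j by ring, b2] at b1
  push_cast
  rw [show (N : ℤ) + 1 - (j + 1) = N - j by ring,
    show (N : ℤ) + 1 + 1 + (j + 1) = N + 2 + j + 1 by ring,
    show (N : ℤ) - (j + 1) = N - j - 1 by ring, show (N : ℤ) + 1 + (j + 1) = N + 2 + j by ring,
    show (N : ℤ) - (j + 1 + 1) = N - j - 2 by ring,
    show (N : ℤ) + 1 + (j + 1 + 1) = N + 2 + j + 1 by ring, a2, a1, b1, b2]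
  field_simp
  ring

/-- The recurrence at index `0`, where the coefficient of `z⁻¹` is minus that of `z⁰`. -/
lemma cTerm_rec_zero {q : ℂ} (hq : ‖q‖ < 1) (N : ℕ) :
    cTerm q (N + 1) 0 = (1 + q ^ (2 * N + 2)) * cTerm q N 0
      - q ^ (N + 1) * (-cTerm q N 0 + cTerm q N 1) := by
  simp only [cTerm]
  rw [show 2 * (N + 1) + 1 = 2 * N + 1 + 1 + 1 by ring, qPoch_succ, qPoch_succ]
  have a1 := invPoch_step hq ((N : ℤ) - 1)
  have a2 := invPoch_step hq (N : ℤ)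
  have b1 := invPoch_step hq ((N : ℤ) + 1)
  have e1 : q ^ ((N : ℤ) + 1) = q ^ (N + 1) := by
    rw [← zpow_natCast]; congr 1
  have e2 : q ^ ((N : ℤ) + 1 + 1) = q ^ (N + 2) := by
    rw [← zpow_natCast]; congr 1
  rw [show (N : ℤ) - 1 + 1 = N by ring, zpow_natCast, a2, e1] at a1
  rw [e2] at b1
  rw [e1] at a2
  push_cast
  simp only [sub_zero, add_zero]
  rw [a1, a2, b1]
  norm_num
  ring

/-- Summation against the weights `2j + 1` turns `d (j - 1) + d (j + 1)`, with the convention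
`d (-1) = -d 0`, into twice the weighted sum of `d`, up to boundary terms. -/
lemma sum_shift (d : ℕ → ℂ) (M : ℕ) :
    (-d 0 + d 1) + ∑ j ∈ Finset.range M, (2 * (j : ℂ) + 3) * (d j + d (j + 2)) =
      2 * ∑ j ∈ Finset.range (M + 1), (2 * (j : ℂ) + 1) * d j
        + ((2 * M + 1) * d (M + 1) - (2 * M + 3) * d M) := by
  induction M with
  | zero => simp; ring
  | succ M ih =>
    rw [Finset.sum_range_succ, ← add_assoc, ih, Finset.sum_range_succ _ (M + 1)]
    push_cast
    ring

/-- Finite form of Jacobi's identity: `∑_{j ≤ N} (2j+1) c_N(j) = (q; q)_N²`. By the recurrence the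
left side is multiplied by `1 + q^{2N+2} - 2 q^{N+1} = (1 - q^{N+1})²` when `N` increases by one. -/
lemma finite_jacobi {q : ℂ} (hq : ‖q‖ < 1) (h0 : q ≠ 0) (N : ℕ) :
    ∀ M, N < M → ∑ j ∈ Finset.range M, (2 * (j : ℂ) + 1) * cTerm q N j = qPoch q N ^ 2 := by
  induction N with
  | zero =>
    intro M hM
    rw [Finset.sum_eq_single 0]
    · have h1 := invPoch_natCast q 0
      have h2 := invPoch_natCast q 1
      have := qPoch_ne_zero hq 1
      push_cast at h1 h2
      simp [cTerm, h1, h2]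
      simp [qPoch] at this ⊢
      field_simp
    · intro j _ hj
      rw [cTerm_of_lt q (by omega), mul_zero]
    · simp; omega
  | succ N ih =>
    intro M hM
    obtain ⟨M, rfl⟩ : ∃ M', M = M' + 1 := ⟨M - 1, by omega⟩
    have hs := sum_shift (cTerm q N) M
    rw [cTerm_of_lt q (show N < M by omega), cTerm_of_lt q (show N < M + 1 by omega),
      ih (M + 1) (by omega)] at hs
    have ih' := ih (M + 1) (by omega)
    rw [Finset.sum_range_succ'] at ih' ⊢
    have : ∀ j : ℕ, (2 * ((j + 1 : ℕ) : ℂ) + 1) * cTerm q (N + 1) (j + 1) =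
        (1 + q ^ (2 * N + 2)) * ((2 * ((j + 1 : ℕ) : ℂ) + 1) * cTerm q N (j + 1)) -
        q ^ (N + 1) * ((2 * (j : ℂ) + 3) * (cTerm q N j + cTerm q N (j + 2))) := by
      intro j
      rw [cTerm_rec hq h0]
      push_cast
      ring
    rw [Finset.sum_congr rfl fun j _ => this j, Finset.sum_sub_distrib, ← Finset.mul_sum,
      ← Finset.mul_sum, cTerm_rec_zero hq, qPoch_succ]
    push_cast at ih' ⊢
    linear_combination (1 + q ^ (2 * N + 2)) * ih' - q ^ (N + 1) * hs

lemma le_triangle (j : ℕ) : j ≤ j * (j + 1) / 2 := by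
  induction j with
  | zero => simp
  | succ j ih => rw [triangle_succ]; omega

lemma summable_odd_pow (k : ℕ) {r : ℝ} (hr0 : 0 ≤ r) (hr : r < 1) :
    Summable fun j : ℕ => ((2 * j + 1 : ℕ) : ℝ) ^ k * r ^ (j * (j + 1) / 2) := by
  have hu : (fun j : ℕ => (((2 * j + 1) ^ k : ℕ) : ℝ)) =O[atTop]
      fun j : ℕ => ((j ^ k : ℕ) : ℝ) := by
    refine Asymptotics.IsBigO.of_bound (3 ^ k) ?_
    filter_upwards [eventually_ge_atTop 1] with j hj
    have : (2 * j + 1) ^ k ≤ 3 ^ k * j ^ k := by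
      rw [← mul_pow]; exact Nat.pow_le_pow_left (by omega) k
    simp only [Real.norm_natCast]
    exact_mod_cast this
  have h := summable_norm_mul_geometric_of_norm_lt_one (r := r)
    (by rwa [Real.norm_of_nonneg hr0]) hu
  refine h.of_nonneg_of_le (fun j => by positivity) fun j => ?_
  rw [Real.norm_of_nonneg (by positivity)]
  push_cast
  exact mul_le_mul_of_nonneg_left (pow_le_pow_of_le_one hr0 hr.le (le_triangle j)) (by positivity)

lemma exists_norm_bound_of_tendsto {f : ℕ → ℂ} {a : ℂ} (h : Tendsto f atTop (nhds a)) :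
    ∃ C : ℝ, 0 ≤ C ∧ ∀ n, ‖f n‖ ≤ C := by
  obtain ⟨C, hC⟩ := h.norm.bddAbove_range
  have hle : ∀ n, ‖f n‖ ≤ C := fun n => hC ⟨n, rfl⟩
  exact ⟨C, (norm_nonneg _).trans (hle 0), hle⟩

/-- Jacobi's identity `∑_{j≥0} (-1)^j (2j+1) q^{j(j+1)/2} = ∏_{n≥1} (1 - q^n)³`, obtained by letting
`N → ∞` in `finite_jacobi`; the product is given as the nonzero limit `P` of `(q; q)_m`. -/
theorem jacobi_cube {q : ℂ} (hq : ‖q‖ < 1) (h0 : q ≠ 0) :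
    ∃ P : ℂ, P ≠ 0 ∧ Tendsto (qPoch q) atTop (nhds P) ∧
      ∑' j : ℕ, (-1 : ℂ) ^ j * ((2 * j + 1 : ℕ) : ℂ) * q ^ (j * (j + 1) / 2) = P ^ 3 := by
  obtain ⟨P, hP, hlim⟩ := qPoch_tendsto hq
  refine ⟨P, hP, hlim, ?_⟩
  have hinv : Tendsto (fun m => (qPoch q m)⁻¹) atTop (nhds P⁻¹) := hlim.inv₀ hP
  obtain ⟨A, hA0, hA⟩ := exists_norm_bound_of_tendsto hlim
  obtain ⟨B, hB0, hB⟩ := exists_norm_bound_of_tendsto hinv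
  have hB' : ∀ k : ℤ, ‖invPoch q k‖ ≤ B := by
    intro k
    unfold invPoch
    split_ifs
    · exact hB _
    · simpa using hB0
  -- Dominated convergence, the `q`-factorials and their reciprocals being uniformly bounded.
  have key : Tendsto (fun N => ∑' j : ℕ, (2 * (j : ℂ) + 1) * cTerm q N j) atTop
      (nhds (∑' j : ℕ, (-1 : ℂ) ^ j * ((2 * j + 1 : ℕ) : ℂ) * q ^ (j * (j + 1) / 2) *
        (P * P⁻¹ * P⁻¹))) := by
    refine tendsto_tsum_of_dominated_convergence
      (bound := fun j : ℕ => ((2 * j + 1 : ℕ) : ℝ) ^ 1 * ‖q‖ ^ (j * (j + 1) / 2) * (A * B * B))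
      ((summable_odd_pow 1 (norm_nonneg q) hq).mul_right _) (fun j => ?_)
      (Eventually.of_forall fun N j => ?_)
    · have t1 : Tendsto (fun N => qPoch q (2 * N + 1)) atTop (nhds P) :=
        hlim.comp (tendsto_atTop_mono (fun N => by omega : ∀ N, N ≤ 2 * N + 1) tendsto_id)
      have t2 : Tendsto (fun N : ℕ => invPoch q ((N : ℤ) - j)) atTop (nhds P⁻¹) := by
        rw [← tendsto_add_atTop_iff_nat j]
        refine hinv.congr fun N => ?_
        rw [← invPoch_natCast]
        congr 1
        push_cast
        ring
      have t3 : Tendsto (fun N : ℕ => invPoch q ((N : ℤ) + 1 + j)) atTop (nhds P⁻¹) := by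
        refine ((tendsto_add_atTop_iff_nat (1 + j)).mpr hinv).congr fun N => ?_
        rw [← invPoch_natCast]
        congr 1
        push_cast
        ring
      refine (((t1.mul t2).mul t3).const_mul
        ((-1 : ℂ) ^ j * ((2 * j + 1 : ℕ) : ℂ) * q ^ (j * (j + 1) / 2))).congr fun N => ?_
      simp only [cTerm]
      push_cast
      ring
    · have e : ‖(2 * (j : ℂ) + 1)‖ = ((2 * j + 1 : ℕ) : ℝ) := by
        rw [← Complex.norm_natCast]; push_cast; rfl
      simp only [cTerm, norm_mul, norm_pow, norm_neg, norm_one, one_pow, one_mul, pow_one]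
      rw [e, ← mul_assoc ((2 * j + 1 : ℕ) : ℝ)]
      gcongr
      · exact hA _
      · exact hB' _
      · exact hB' _
  have hfin : ∀ N, ∑' j : ℕ, (2 * (j : ℂ) + 1) * cTerm q N j = qPoch q N ^ 2 := by
    intro N
    rw [tsum_eq_sum (s := Finset.range (N + 1)), finite_jacobi hq h0 N _ (Nat.lt_succ_self N)]
    intro j hj
    rw [cTerm_of_lt q (by simpa using hj), mul_zero]
  simp only [hfin] at key
  have h := tendsto_nhds_unique key (hlim.pow 2)
  rw [tsum_mul_right] at h
  field_simp at h
  rw [h]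

/-! ### Holomorphy of the Ramanujan series -/

lemma differentiableAt_series (k : ℕ) {q : ℂ} (hq : ‖q‖ < 1) :
    DifferentiableAt ℂ (fun q : ℂ =>
      ∑' j : ℕ, (-1 : ℂ) ^ j * ((2 * j + 1 : ℕ) : ℂ) ^ k * q ^ (j * (j + 1) / 2)) q := by
  obtain ⟨r, hr, hr1⟩ := exists_between hq
  refine (differentiableOn_tsum_of_summable_norm (U := Metric.ball 0 r)
    (summable_odd_pow k ((norm_nonneg q).trans hr.le) hr1) (fun j => by fun_prop)
    Metric.isOpen_ball fun j w hw => ?_).differentiableAt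
    (Metric.isOpen_ball.mem_nhds (by simpa using hr))
  simp only [norm_mul, norm_pow, norm_neg, norm_one, one_pow, one_mul, Complex.norm_natCast]
  gcongr
  exact (mem_ball_zero_iff.mp hw).le

lemma norm_qq_lt_one {τ : ℂ} (hτ : 0 < τ.im) : ‖qq τ‖ < 1 := by
  simpa [qq] using UpperHalfPlane.norm_exp_two_pi_I_lt_one ⟨τ, hτ⟩

lemma denominator_ne_zero {τ : ℂ} (hτ : 0 < τ.im) :
    ∑' j : ℕ, (-1 : ℂ) ^ j * ((2 * j + 1 : ℕ) : ℂ) * qq τ ^ (j * (j + 1) / 2) ≠ 0 := by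
  obtain ⟨P, hP, -, h⟩ := jacobi_cube (norm_qq_lt_one hτ) (Complex.exp_ne_zero _)
  rw [h]
  exact pow_ne_zero 3 hP

lemma differentiableAt_Uram_qq (n : ℕ) {τ : ℂ} (hτ : 0 < τ.im) :
    DifferentiableAt ℂ (fun τ => Uram n (qq τ)) τ := by
  have h1 : DifferentiableAt ℂ (Uram n) (qq τ) := by
    refine (differentiableAt_series (2 * n + 1) (norm_qq_lt_one hτ)).div ?_
      (denominator_ne_zero hτ)
    simpa using differentiableAt_series 1 (norm_qq_lt_one hτ)
  have h2 : DifferentiableAt ℂ qq τ := by unfold qq; fun_prop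
  exact h1.comp τ h2

/-! ### The lowering operator -/

lemma hasFDerivAt_term {h : ℂ → ℂ} {h' τ : ℂ} (hh : HasDerivAt h h' τ) (hτ : 0 < τ.im) (k : ℕ) :
    HasFDerivAt (fun τ : ℂ => h τ * (((τ.im : ℝ) : ℂ) ^ k)⁻¹)
      (h τ • ((-(k * (τ.im : ℂ) ^ (k - 1)) / ((τ.im : ℂ) ^ k) ^ 2) •
        (Complex.ofRealCLM.comp Complex.imCLM)) +
        (((τ.im : ℂ) ^ k)⁻¹) • (h' • (1 : ℂ →L[ℝ] ℂ))) τ := by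
  have hv : (τ.im : ℂ) ≠ 0 := by exact_mod_cast hτ.ne'
  have g1 : HasFDerivAt (fun τ : ℂ => ((τ.im : ℝ) : ℂ)) (Complex.ofRealCLM.comp Complex.imCLM) τ :=
    (Complex.ofRealCLM.comp Complex.imCLM).hasFDerivAt
  have g2 := ((hasDerivAt_pow k (τ.im : ℂ)).fun_inv (pow_ne_zero k hv)).complexToReal_fderiv
  have g3 := g2.comp τ g1
  have g4 := hh.complexToReal_fderiv.mul g3
  convert! g4 using 1

/-- For holomorphic `h`, the operator `L` only sees the power of `v`, and `L(v^{-k}) = -k v^{1-k}`. -/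
lemma lowerOp_term {h : ℂ → ℂ} {τ : ℂ} (hh : DifferentiableAt ℂ h τ) (hτ : 0 < τ.im) (k : ℕ) :
    lowerOp (fun τ : ℂ => h τ * (((τ.im : ℝ) : ℂ) ^ k)⁻¹) τ =
      -(k : ℂ) * h τ * ((τ.im : ℂ) * ((τ.im : ℂ) ^ k)⁻¹) := by
  have hv : (τ.im : ℂ) ≠ 0 := by exact_mod_cast hτ.ne'
  unfold lowerOp
  rw [(hasFDerivAt_term hh.hasDerivAt hτ k).fderiv]
  rcases k with _ | k
  · simp
    ring_nf
    simp
  · simp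
    field_simp
    ring_nf
    simp
    ring

lemma lowerOp_sum {ι : Type*} (s : Finset ι) (c : ℂ) (a : ι → ℂ) (f : ι → ℂ → ℂ) (τ : ℂ)
    (hf : ∀ i ∈ s, DifferentiableAt ℝ (f i) τ) :
    lowerOp (fun τ => c * ∑ i ∈ s, a i * f i τ) τ = c * ∑ i ∈ s, a i * lowerOp (f i) τ := by
  have h : HasFDerivAt (fun τ => c * ∑ i ∈ s, a i * f i τ)
      (c • ∑ i ∈ s, a i • fderiv ℝ (f i) τ) τ :=
    (HasFDerivAt.fun_sum fun i hi => (hf i hi).hasFDerivAt.const_mul (a i)).const_mul c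
  unfold lowerOp
  rw [h.fderiv]
  simp only [smul_apply, sum_apply, smul_eq_mul,
    Finset.mul_sum, ← Finset.sum_add_distrib]
  refine Finset.sum_congr rfl fun i _ => ?_
  ring

lemma Uhat_eq (n : ℕ) : Uhat n = fun τ => 2 * Complex.I * ∑ j ∈ Finset.range (n + 1),
    ((-1 : ℂ) ^ (n + j) * (π : ℂ) ^ (2 * n - j + 1) /
      (2 ^ j * (Nat.factorial j : ℂ) * (Nat.factorial (2 * n - 2 * j + 1) : ℂ))) *
    (Uram (n - j) (qq τ) * (((τ.im : ℝ) : ℂ) ^ j)⁻¹) := by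
  ext τ
  unfold Uhat
  congr 1
  refine Finset.sum_congr rfl fun j _ => ?_
  rw [mul_pow]
  simp only [div_eq_mul_inv, mul_inv]
  ring

/-- `Û₀(τ) = 2πi` for all `τ ∈ ℍ`, and for every `n ≥ 1` the lowering
operator satisfies `L(Û_{2n}) = −(π/2)·Û_{2n−2}` on ℍ. -/
theorem Uhat_lowering :
    (∀ τ : ℂ, 0 < τ.im → Uhat 0 τ = 2 * (π : ℂ) * Complex.I) ∧
    (∀ n : ℕ, 1 ≤ n → ∀ τ : ℂ, 0 < τ.im →
      lowerOp (Uhat n) τ = -((π : ℂ) / 2) * Uhat (n - 1) τ) := by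
  constructor
  · intro τ hτ
    have h := denominator_ne_zero hτ
    have hU : Uram 0 (qq τ) = 1 := by
      unfold Uram
      simpa using div_self h
    simp [Uhat, hU]
    ring
  · intro n hn τ hτ
    obtain ⟨m, rfl⟩ : ∃ m, n = m + 1 := ⟨n - 1, by omega⟩
    have hv : (τ.im : ℂ) ≠ 0 := by exact_mod_cast hτ.ne'
    rw [Uhat_eq (m + 1), lowerOp_sum]
    · rw [Finset.sum_range_succ']
      simp only [lowerOp_term (differentiableAt_Uram_qq _ hτ) hτ]
      rw [Nat.add_sub_cancel, Uhat_eq m]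
      simp only [Finset.mul_sum, Nat.cast_zero, neg_zero, zero_mul, mul_zero, add_zero]
      refine Finset.sum_congr rfl fun j hj => ?_
      have hj' : j ≤ m := by simpa [Nat.lt_succ_iff] using hj
      rw [show m + 1 - (j + 1) = m - j by omega,
        show 2 * (m + 1) - (j + 1) + 1 = 2 * m - j + 1 + 1 by omega,
        show 2 * (m + 1) - 2 * (j + 1) + 1 = 2 * m - 2 * j + 1 by omega,
        Nat.factorial_succ]
      have h1 : (Nat.factorial j : ℂ) ≠ 0 := by exact_mod_cast Nat.factorial_ne_zero j
      have h2 : (Nat.factorial (2 * m - 2 * j + 1) : ℂ) ≠ 0 := by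
        exact_mod_cast Nat.factorial_ne_zero _
      have h3 : ((j : ℂ) + 1) ≠ 0 := by exact_mod_cast Nat.succ_ne_zero j
      push_cast
      field_simp
      ring
    · intro i _
      exact (hasFDerivAt_term (differentiableAt_Uram_qq _ hτ).hasDerivAt hτ i).differentiableAt
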